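/- Let ∅ ≠ S ⊆ L ⊆ M ⊊ N ⊆ V. Then λ_A^M(x_A) = λ_A^N(x_A) holds for every A with S ⊆ A ⊆ L and every x_A ∈ 𝔛_A (i.e., 𝔛_N is collapsible into 𝔛_M with respect to the set C_S = {λ_A^N : S ⊆ A ⊆ L}) if and only if Σ_{R ⊆ S} (−1)^{|S∖R|} d̃_{L∖R}^{(M)}(x_{L∖R}) = 0 for every x_L ∈ 𝔛_L. -/

import Mathlib

open Finset

variable {V : Type*} [Fintype V] [DecidableEq V]
variable {𝔛 : V → Type*} [∀ v, Fintype (𝔛 v)] [∀ v, DecidableEq (𝔛 v)]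
  [∀ v, Nonempty (𝔛 v)]

/-- The marginal `p_A` of a distribution `p` on the full table, evaluated at the
`A`-coordinates of `x`. -/
noncomputable def margin (p : (∀ v, 𝔛 v) → ℝ) (A : Finset V) (x : ∀ v, 𝔛 v) : ℝ :=
  ∑ y ∈ Finset.univ.filter (fun y : ∀ v, 𝔛 v => ∀ v ∈ A, y v = x v), p y

/-- `ν_L^M(x_L) = (1/|𝔛_{M∖L}|) Σ_{j ∈ 𝔛_M : j_L = x_L} log p_M(j)`, written with sums over
full configurations (for `L ⊆ M` the extra coordinates cancel against the normalization). -/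
noncomputable def nu (p : (∀ v, 𝔛 v) → ℝ) (L M : Finset V) (x : ∀ v, 𝔛 v) : ℝ :=
  (∏ v ∈ Lᶜ, (Fintype.card (𝔛 v) : ℝ))⁻¹ *
    ∑ j ∈ Finset.univ.filter (fun j : ∀ v, 𝔛 v => ∀ v ∈ L, j v = x v),
      Real.log (margin p M j)

/-- The marginal log-linear parameter `λ_L^M(x_L) = Σ_{L' ⊆ L} (−1)^{|L∖L'|} ν_{L'}^M(x_{L'})`. -/
noncomputable def mll (p : (∀ v, 𝔛 v) → ℝ) (L M : Finset V) (x : ∀ v, 𝔛 v) : ℝ :=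
  ∑ L' ∈ L.powerset, (-1 : ℝ) ^ ((L \ L').card) * nu p L' M x

/-- `d^{(M)}(x_M) = log p_M(x_M) − ν_M^N(x_M)`. -/
noncomputable def dd (p : (∀ v, 𝔛 v) → ℝ) (M N : Finset V) (x : ∀ v, 𝔛 v) : ℝ :=
  Real.log (margin p M x) - nu p M N x

/-- `d̃_Z^{(M)}(x_Z) = (1/|𝔛_{M∖Z}|) Σ_{j ∈ 𝔛_M : j_Z = x_Z} d^{(M)}(j)`, written with sums
over full configurations (for `Z ⊆ M` the extra coordinates cancel). -/
noncomputable def dtilde (p : (∀ v, 𝔛 v) → ℝ) (M N Z : Finset V) (x : ∀ v, 𝔛 v) : ℝ :=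
  (∏ v ∈ Zᶜ, (Fintype.card (𝔛 v) : ℝ))⁻¹ *
    ∑ j ∈ Finset.univ.filter (fun j : ∀ v, 𝔛 v => ∀ v ∈ Z, j v = x v), dd p M N j

/-!
For a function `f` on the full table let `E_A f` be its average over the coordinates outside `A`.
Then `E_A E_B = E_{A ∩ B}`, so the `E_A` are commuting projections, and the Möbius sums
`π_A = ∑_{B ⊆ A} (-1)^{|A \ B|} E_B` are the projections onto the pure interactions of the ANOVA
decomposition: `π_A E_C` is `π_A` if `A ⊆ C` and `0` otherwise. Since `ν_L^M = E_L (log p_M)`, one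
has `λ_A^M - λ_A^N = π_A d^{(M)}` for `A ⊆ M`, and the alternating sum of the `d̃_{L \ R}` is
`D d^{(M)}` with `D = ∑_{R ⊆ S} (-1)^{|S \ R|} E_{L \ R}`. By Möbius inversion
`D = (-1)^{|S|} ∑_{S ⊆ A ⊆ L} π_A`, and conversely `π_A D = (-1)^{|S|} π_A` for `S ⊆ A ⊆ L`, because
only `R = ∅` satisfies `A ⊆ L \ R`. Hence `D` and the family of these `π_A` kill the same functions.
-/

open scoped BigOperators

section MoebiusSum

variable {ι : Type*} [DecidableEq ι] {G : Type*} [AddCommGroup G]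

/-- The Möbius transform `∑_{B ⊆ A} (-1)^{|A \ B|} h(B)` of a function `h` of finite sets. The
signs are integers, so that `h` may take values in any additive group: numbers, functions on a
table, or operators on such functions. -/
def moebiusSum (h : Finset ι → G) (A : Finset ι) : G :=
  ∑ B ∈ A.powerset, (-1 : ℤ) ^ #(A \ B) • h B

theorem moebiusSum_insert (h : Finset ι → G) {a : ι} {A : Finset ι} (ha : a ∉ A) :
    moebiusSum h (insert a A) = moebiusSum (fun B ↦ h (insert a B)) A - moebiusSum h A := by
  unfold moebiusSum
  rw [sum_powerset_insert ha, add_comm, sub_eq_add_neg, ← sum_neg_distrib]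
  congr 1 <;> refine sum_congr rfl fun B hB ↦ ?_
  · rw [insert_sdiff_insert, sdiff_insert_of_notMem ha]
  · have haB : a ∉ B := fun haB ↦ ha (mem_powerset.1 hB haB)
    rw [insert_sdiff_of_notMem _ haB, card_insert_of_notMem (by simp [ha]), pow_succ, mul_neg_one,
      neg_smul]

theorem sum_powerset_moebiusSum (h : Finset ι → G) (L : Finset ι) :
    ∑ A ∈ L.powerset, moebiusSum h A = h L := by
  induction L using Finset.induction_on generalizing h with
  | empty => simp [moebiusSum]
  | insert a L ha ih =>
    have hins : ∀ A ∈ L.powerset,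
        moebiusSum h (insert a A) = moebiusSum (fun B ↦ h (insert a B)) A - moebiusSum h A :=
      fun A hA ↦ moebiusSum_insert h fun haA ↦ ha (mem_powerset.1 hA haA)
    rw [sum_powerset_insert ha, sum_congr rfl hins, sum_sub_distrib, ih, ih, add_sub_cancel]

theorem sum_Icc_insert_add_sum_Icc_erase (h : Finset ι → G) (a : ι) (S L : Finset ι) :
    ∑ A ∈ Icc (insert a S) L, h A + ∑ A ∈ Icc S (L.erase a), h A = ∑ A ∈ Icc S L, h A := by
  rw [← sum_filter_add_sum_filter_not (Icc S L) (a ∈ ·)]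
  congr 2 <;> ext A <;> simp only [mem_Icc, mem_filter] <;> grind

theorem moebiusSum_sdiff (h : Finset ι → G) (S L : Finset ι) :
    moebiusSum (fun R ↦ h (L \ R)) S = (-1 : ℤ) ^ #S • ∑ A ∈ Icc S L, moebiusSum h A := by
  induction S using Finset.induction_on generalizing L with
  | empty =>
    have hIcc : Icc ∅ L = L.powerset := by ext; simp
    simp [moebiusSum, hIcc, ← sum_powerset_moebiusSum h L]
  | insert a S ha ih =>
    simp only [moebiusSum_insert _ ha, sdiff_insert, ← erase_sdiff_comm]
    rw [ih, ih, ← sum_Icc_insert_add_sum_Icc_erase _ a S L, card_insert_of_notMem ha]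
    module

theorem moebiusSum_inter_of_not_subset (h : Finset ι → G) {A C : Finset ι} (hAC : ¬A ⊆ C) :
    moebiusSum (fun B ↦ h (B ∩ C)) A = 0 := by
  obtain ⟨a, haA, haC⟩ := not_subset.1 hAC
  rw [← insert_erase haA, moebiusSum_insert _ (notMem_erase a A)]
  simp only [insert_inter_of_notMem haC, sub_self]

theorem moebiusSum_linearMap_apply {𝕜 W Y : Type*} [Semiring 𝕜] [AddCommMonoid W] [Module 𝕜 W]
    [Module 𝕜 G] (T : Finset ι → W →ₗ[𝕜] Y → G) (A : Finset ι) (w : W) (y : Y) :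
    moebiusSum T A w y = ∑ B ∈ A.powerset, (-1 : ℤ) ^ #(A \ B) • T B w y := by
  simp only [moebiusSum, LinearMap.sum_apply, LinearMap.smul_apply, Finset.sum_apply,
    Pi.smul_apply]

end MoebiusSum

section MultiplicativeFamily

variable {ι : Type*} [DecidableEq ι] {R : Type*} [Ring R] {e : Finset ι → R}

theorem moebiusSum_mul (h : Finset ι → R) (A : Finset ι) (r : R) :
    moebiusSum h A * r = moebiusSum (fun B ↦ h B * r) A := by
  simp only [moebiusSum, sum_mul, smul_mul_assoc]

theorem mul_moebiusSum (r : R) (h : Finset ι → R) (A : Finset ι) :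
    r * moebiusSum h A = moebiusSum (fun B ↦ r * h B) A := by
  simp only [moebiusSum, mul_sum, mul_smul_comm]

theorem moebiusSum_mul_of_subset (he : ∀ A B, e A * e B = e (A ∩ B)) {A C : Finset ι}
    (hAC : A ⊆ C) : moebiusSum e A * e C = moebiusSum e A := by
  rw [moebiusSum_mul]
  refine sum_congr rfl fun B hB ↦ ?_
  simp only [he, inter_eq_left.2 ((mem_powerset.1 hB).trans hAC)]

theorem moebiusSum_mul_of_not_subset (he : ∀ A B, e A * e B = e (A ∩ B)) {A C : Finset ι}
    (hAC : ¬A ⊆ C) : moebiusSum e A * e C = 0 := by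
  simp only [moebiusSum_mul, he, moebiusSum_inter_of_not_subset e hAC]

theorem moebiusSum_mul_moebiusSum_sdiff (he : ∀ A B, e A * e B = e (A ∩ B))
    {S A L : Finset ι} (hSA : S ⊆ A) (hAL : A ⊆ L) :
    moebiusSum e A * moebiusSum (fun T ↦ e (L \ T)) S = (-1 : ℤ) ^ #S • moebiusSum e A := by
  rw [mul_moebiusSum, moebiusSum, sum_eq_single ∅]
  · rw [sdiff_empty, sdiff_empty, moebiusSum_mul_of_subset he hAL]
  · intro T hT hT0
    have hAT : ¬A ⊆ L \ T := fun hAT ↦ by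
      obtain ⟨t, ht⟩ := nonempty_iff_ne_empty.2 hT0
      exact (mem_sdiff.1 (hAT (hSA (mem_powerset.1 hT ht)))).2 ht
    rw [moebiusSum_mul_of_not_subset he hAT, smul_zero]
  · exact fun hS ↦ absurd (empty_mem_powerset S) hS

theorem forall_moebiusSum_smul_eq_zero_iff {W : Type*} [AddCommGroup W] [Module R W]
    (he : ∀ A B, e A * e B = e (A ∩ B)) (S L : Finset ι) (w : W) :
    (∀ A, S ⊆ A → A ⊆ L → moebiusSum e A • w = 0) ↔
      moebiusSum (fun T ↦ e (L \ T)) S • w = 0 := by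
  constructor
  · intro hA
    rw [moebiusSum_sdiff e, smul_assoc, sum_smul, sum_eq_zero, smul_zero]
    exact fun A hmem ↦ hA A (mem_Icc.1 hmem).1 (mem_Icc.1 hmem).2
  · intro hT A hSA hAL
    have hsign : (-1 : ℤ) ^ #S • moebiusSum e A • w = 0 := by
      rw [← smul_assoc, ← moebiusSum_mul_moebiusSum_sdiff he hSA hAL, mul_smul, hT, smul_zero]
    exact (IsUnit.smul_eq_zero (isUnit_neg_one.pow _)).1 hsign

end MultiplicativeFamily

section Table

variable {ι : Type*} [Fintype ι] [DecidableEq ι] {X : ι → Type*} [∀ i, Fintype (X i)]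
  [∀ i, DecidableEq (X i)]

/-- The cylinder of the configurations that agree with `x` on the coordinates in `A`. -/
def cylinder (A : Finset ι) (x : ∀ i, X i) : Finset (∀ i, X i) :=
  {y | ∀ i ∈ A, y i = x i}

theorem mem_cylinder {A : Finset ι} {x y : ∀ i, X i} :
    y ∈ cylinder A x ↔ ∀ i ∈ A, y i = x i := by
  simp [cylinder]

theorem card_cylinder (A : Finset ι) (x : ∀ i, X i) :
    #(cylinder A x) = ∏ i ∈ Aᶜ, Fintype.card (X i) := by
  have hpi : cylinder A x = Fintype.piFinset fun i ↦ if i ∈ A then {x i} else univ := by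
    ext y
    simp only [mem_cylinder, Fintype.mem_piFinset]
    exact forall_congr' fun i ↦ by split_ifs with hi <;> simp [hi]
  rw [hpi, Fintype.card_piFinset, ← prod_subset (subset_univ Aᶜ)]
  · exact prod_congr rfl fun i hi ↦ by rw [if_neg (mem_compl.1 hi), card_univ]
  · intro i _ hi
    rw [if_pos (by simpa using hi), card_singleton]

theorem cylinder_inter_cylinder {A B : Finset ι} {x y : ∀ i, X i}
    (hy : y ∈ cylinder (A ∩ B) x) :
    cylinder A x ∩ cylinder B y = cylinder (A ∪ B) (A.piecewise x y) := by
  ext z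
  simp only [mem_inter, mem_cylinder, mem_union, piecewise] at hy ⊢
  grind

variable {E : Type*} [AddCommGroup E]

theorem sum_cylinder_sum_cylinder (A B : Finset ι) (f : (∀ i, X i) → E) (x : ∀ i, X i) :
    ∑ y ∈ cylinder A x, ∑ z ∈ cylinder B y, f z =
      (∏ i ∈ (A ∪ B)ᶜ, Fintype.card (X i)) • ∑ z ∈ cylinder (A ∩ B) x, f z := by
  have hswap : ∀ y z, y ∈ cylinder A x ∧ z ∈ cylinder B y ↔
      y ∈ cylinder A x ∩ cylinder B z ∧ z ∈ cylinder (A ∩ B) x := fun y z ↦ by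
    simp only [mem_inter, mem_cylinder]
    grind
  rw [sum_comm' hswap, smul_sum]
  refine sum_congr rfl fun z hz ↦ ?_
  rw [sum_const, cylinder_inter_cylinder hz, card_cylinder]

variable [Module ℚ≥0 E]

/-- The operator averaging a function on the table over the coordinates outside `A`, that is, the
conditional expectation given the coordinates in `A` under the uniform distribution. -/
def coordMean (A : Finset ι) : Module.End ℚ≥0 ((∀ i, X i) → E) where
  toFun f x := 𝔼 y ∈ cylinder A x, f y
  map_add' f g := funext fun _ ↦ expect_add_distrib _ f g
  map_smul' c f := funext fun _ ↦ (smul_expect c _ f).symm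

theorem coordMean_apply (A : Finset ι) (f : (∀ i, X i) → E) (x : ∀ i, X i) :
    coordMean A f x =
      (∏ i ∈ Aᶜ, (Fintype.card (X i) : ℚ≥0))⁻¹ • ∑ y ∈ cylinder A x, f y := by
  rw [← Nat.cast_prod, ← card_cylinder A x]
  rfl

theorem inv_prod_card_mul_sum_eq_coordMean {K : Type*} [Field K] [CharZero K] (A : Finset ι)
    (f : (∀ i, X i) → K) (x : ∀ i, X i) :
    (∏ i ∈ Aᶜ, (Fintype.card (X i) : K))⁻¹ * ∑ y with ∀ i ∈ A, y i = x i, f y =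
      coordMean A f x := by
  rw [coordMean_apply, NNRat.smul_def]
  push_cast
  rfl

theorem coordMean_mul_coordMean [∀ i, Nonempty (X i)] (A B : Finset ι) :
    (coordMean A * coordMean B : Module.End ℚ≥0 ((∀ i, X i) → E)) = coordMean (A ∩ B) := by
  refine LinearMap.ext fun f ↦ funext fun x ↦ ?_
  have hcard : (∏ i ∈ (A ∩ B)ᶜ, (Fintype.card (X i) : ℚ≥0)) *
      ∏ i ∈ (A ∪ B)ᶜ, (Fintype.card (X i) : ℚ≥0) =
        (∏ i ∈ Aᶜ, (Fintype.card (X i) : ℚ≥0)) * ∏ i ∈ Bᶜ, (Fintype.card (X i) : ℚ≥0) := by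
    rw [compl_inter, compl_union]
    exact prod_union_inter
  have hne (C : Finset ι) : (∏ i ∈ C, (Fintype.card (X i) : ℚ≥0)) ≠ 0 :=
    prod_ne_zero_iff.2 fun i _ ↦ Nat.cast_ne_zero.2 Fintype.card_ne_zero
  simp only [Module.End.mul_apply, coordMean_apply, ← smul_sum, sum_cylinder_sum_cylinder,
    ← Nat.cast_smul_eq_nsmul ℚ≥0, Nat.cast_prod, smul_smul]
  congr 1
  rw [← mul_assoc, ← mul_inv, ← hcard, mul_inv, mul_assoc, inv_mul_cancel₀ (hne _), mul_one]

/-- The projection onto the pure `A`-interactions in the ANOVA (Hoeffding) decomposition of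
functions on the table; `interaction A (log p_M)` is the parameter `λ_A^M`. -/
def interaction (A : Finset ι) : Module.End ℚ≥0 ((∀ i, X i) → E) :=
  moebiusSum coordMean A

theorem interaction_sub_coordMean [∀ i, Nonempty (X i)] {A M : Finset ι} (hAM : A ⊆ M)
    (f g : (∀ i, X i) → E) :
    interaction A (f - coordMean M g) = interaction A f - interaction A g := by
  rw [map_sub, ← Module.End.mul_apply, interaction,
    moebiusSum_mul_of_subset coordMean_mul_coordMean hAM]

theorem forall_interaction_eq_zero_iff [∀ i, Nonempty (X i)] (S L : Finset ι)
    (d : (∀ i, X i) → E) :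
    (∀ A, S ⊆ A → A ⊆ L → interaction A d = 0) ↔
      ∀ x, ∑ R ∈ S.powerset, (-1 : ℤ) ^ #(S \ R) • coordMean (L \ R) d x = 0 := by
  have hmul := coordMean_mul_coordMean (X := X) (E := E)
  refine (forall_moebiusSum_smul_eq_zero_iff hmul S L d).trans ?_
  rw [Module.End.smul_def, funext_iff]
  simp only [moebiusSum_linearMap_apply, Pi.zero_apply]

theorem nu_eq_coordMean (p : (∀ i, X i) → ℝ) (L M : Finset ι) :
    nu p L M = coordMean L fun x ↦ Real.log (margin p M x) :=
  funext fun x ↦ inv_prod_card_mul_sum_eq_coordMean L _ x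

theorem mll_eq_interaction (p : (∀ i, X i) → ℝ) (A M : Finset ι) :
    mll p A M = interaction A fun x ↦ Real.log (margin p M x) := by
  ext x
  simp [mll, interaction, moebiusSum_linearMap_apply, nu_eq_coordMean]

theorem dtilde_eq_coordMean (p : (∀ i, X i) → ℝ) (M N Z : Finset ι) :
    dtilde p M N Z = coordMean Z ((fun x ↦ Real.log (margin p M x)) -
      coordMean M fun x ↦ Real.log (margin p N x)) := by
  rw [← nu_eq_coordMean]
  exact funext fun x ↦ inv_prod_card_mul_sum_eq_coordMean Z _ x

end Table

theorem stmt7_general {ι : Type*} [Fintype ι] [DecidableEq ι] {X : ι → Type*}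
    [∀ i, Fintype (X i)] [∀ i, DecidableEq (X i)] [∀ i, Nonempty (X i)]
    {E : Type*} [AddCommGroup E] [Module ℚ≥0 E] (f g : (∀ i, X i) → E)
    (S : Finset ι) {L M : Finset ι} (hLM : L ⊆ M) :
    (∀ A, S ⊆ A → A ⊆ L → ∀ x, interaction A f x = interaction A g x) ↔
      ∀ x, ∑ R ∈ S.powerset, (-1 : ℤ) ^ #(S \ R) • coordMean (L \ R) (f - coordMean M g) x = 0 := by
  rw [← forall_interaction_eq_zero_iff S L]
  refine forall₃_congr fun A _ hAL ↦ ?_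
  rw [interaction_sub_coordMean (hAL.trans hLM), sub_eq_zero, funext_iff]

theorem stmt7 (p : (∀ v, 𝔛 v) → ℝ) (hp : ∀ x, 0 < p x) (hsum : ∑ x, p x = 1)
    (S L M N : Finset V) (hS : S.Nonempty) (hSL : S ⊆ L) (hLM : L ⊆ M) (hMN : M ⊂ N) :
    (∀ A : Finset V, S ⊆ A → A ⊆ L → ∀ x : ∀ v, 𝔛 v, mll p A M x = mll p A N x) ↔
    (∀ x : ∀ v, 𝔛 v,
      ∑ R ∈ S.powerset, (-1 : ℝ) ^ ((S \ R).card) * dtilde p M N (L \ R) x = 0) := by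
  simpa [mll_eq_interaction, dtilde_eq_coordMean] using
    stmt7_general (fun x ↦ Real.log (margin p M x)) (fun x ↦ Real.log (margin p N x)) S hLM
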